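/- Let h : ℝ^L → ℝ^L be continuous and suppose there is R > 0 such that ⟨h(v), v⟩ ≥ 0 for all v with ‖v‖ = R. Then there exists v̄ with ‖v̄‖ ≤ R and h(v̄) = 0. -/

import Mathlib

open RealInnerProductSpace

open Function Metric MeasureTheory Module Polynomial Set Topology
open scoped NNReal

/-!
The argument is Milnor's analytic proof that there is no `C¹` retraction `r` of the closed ball `B`
onto its sphere, in the form given by Rogers. For small `t` the map `x ↦ x + t (r x - x)` is a
bijection of `B` with positive Jacobian determinant, so the integral of this determinant over `B` is
the volume of `B`. That integral is a polynomial in `t`, hence constant, and at `t = 1` it is the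
integral of `det r'`, which vanishes because `r` takes values in a sphere.

A continuous field `h` without zeros on `B` and pointing strictly outwards on the sphere would
yield such a retraction: by a partition of unity there is a `C¹` field `p` with `⟪h x, p x⟫ > 0` on
`B` and `p x = x` on the sphere, and `x ↦ R p x / ‖p x‖` retracts. If `h` is only weakly outward,
apply this to `h + ε • id` and let `ε → 0`.
-/

section LipschitzPerturbation

variable {E : Type*} [NormedAddCommGroup E] [NormedSpace ℝ E]

theorem segment_inter_frontier_nonempty {s : Set E} {x y : E} (hx : x ∈ s) (hy : y ∉ s) :
    (segment ℝ x y ∩ frontier s).Nonempty := by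
  have hmeet : (segment ℝ x y ∩ (closure s ∩ closure sᶜ)).Nonempty :=
    isPreconnected_closed_iff.1 (convex_segment x y).isPreconnected _ _
      isClosed_closure isClosed_closure
      (fun z _ => (em (z ∈ s)).imp (subset_closure ·) (subset_closure ·))
      ⟨x, left_mem_segment ℝ x y, subset_closure hx⟩
      ⟨y, right_mem_segment ℝ x y, subset_closure hy⟩
  rwa [← frontier_eq_closure_inter_closure] at hmeet

theorem lipschitzWith_indicator {F : Type*} [SeminormedAddCommGroup F] {K : ℝ≥0} {s : Set E}
    {u : E → F} (hs : IsClosed s) (hu : LipschitzOnWith K u s) (hzero : ∀ x ∈ frontier s, u x = 0) :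
    LipschitzWith K (s.indicator u) := by
  have norm_le_of_notMem {x y : E} (hx : x ∈ s) (hy : y ∉ s) : ‖u x‖ ≤ K * dist x y := by
    obtain ⟨z, hz, hzs⟩ := segment_inter_frontier_nonempty hx hy
    calc ‖u x‖ = dist (u x) (u z) := by rw [hzero z hzs, dist_zero_right]
      _ ≤ K * dist x z := hu.dist_le_mul x hx z (hs.frontier_subset hzs)
      _ ≤ K * dist x y := by
        gcongr
        linarith [dist_add_dist_of_mem_segment hz, dist_nonneg (x := z) (y := y)]
  refine LipschitzWith.of_dist_le_mul fun x y => ?_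
  by_cases hx : x ∈ s <;> by_cases hy : y ∈ s
  · simpa only [indicator_of_mem, hx, hy] using hu.dist_le_mul x hx y hy
  · simpa [hx, hy] using norm_le_of_notMem hx hy
  · simpa [hx, hy, dist_comm x y] using norm_le_of_notMem hy hx
  · simpa [hx, hy] using mul_nonneg K.2 dist_nonneg

theorem bijective_id_add_of_lipschitzWith [CompleteSpace E] {K : ℝ≥0} {u : E → E}
    (hu : LipschitzWith K u) (hK : K < 1) : Bijective (id + u) := by
  have happrox : ApproximatesLinearOn (id + u)
      (ContinuousLinearEquiv.refl ℝ E : E →L[ℝ] E) univ K := by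
    rw [ApproximatesLinearOn.approximatesLinearOn_iff_lipschitzOnWith, lipschitzOnWith_univ]
    convert hu using 1
    ext x
    simp
  have hsmall : Subsingleton E ∨ K < ‖((ContinuousLinearEquiv.refl ℝ E).symm : E →L[ℝ] E)‖₊⁻¹ := by
    rcases subsingleton_or_nontrivial E with hE | hE
    · exact .inl hE
    · exact .inr (by simpa using hK)
  exact (happrox.toHomeomorph _ hsmall).bijective

theorem bijOn_id_add_of_lipschitzOnWith [CompleteSpace E] {K : ℝ≥0} {s : Set E} {u : E → E}
    (hs : IsClosed s) (hu : LipschitzOnWith K u s) (hK : K < 1)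
    (hzero : ∀ x ∈ frontier s, u x = 0) : BijOn (id + u) s s := by
  have hbij : Bijective (id + s.indicator u) :=
    bijective_id_add_of_lipschitzWith (lipschitzWith_indicator hs hu hzero) hK
  have hcompl : BijOn (id + s.indicator u) sᶜ sᶜ :=
    (bijOn_id sᶜ).congr fun x (hx : x ∉ s) => by simp [hx]
  have hbijOn : BijOn (id + s.indicator u) s s := by simpa using hcompl.compl hbij
  exact hbijOn.congr fun x hx => by simp [hx]

end LipschitzPerturbation

section Determinant

theorem exists_natDegree_le_eval_eq_det_add_smul {R M : Type*} [CommRing R] [Nontrivial R]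
    [AddCommGroup M] [Module R M] [Module.Free R M] [Module.Finite R M] (f g : M →ₗ[R] M) :
    ∃ p : R[X], p.natDegree ≤ finrank R M ∧ ∀ t, p.eval t = (f + t • g).det := by
  classical
  let b := Module.Free.chooseBasis R M
  let F := LinearMap.toMatrix b b f
  let G := LinearMap.toMatrix b b g
  refine ⟨((X : R[X]) • G.map C + F.map C).det, ?_, fun t => ?_⟩
  · rw [finrank_eq_card_chooseBasisIndex]
    exact natDegree_det_X_add_C_le G F
  · rw [← LinearMap.det_toMatrix b, ← coe_evalRingHom, RingHom.map_det]
    congr 1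
    ext i j
    simp [F, G, add_comm, mul_comm t]

theorem exists_polynomial_eval_eq_integral {𝕜 α : Type*} [RCLike 𝕜] [MeasurableSpace α]
    {μ : Measure α} {n : ℕ} {p : α → 𝕜[X]} (hdeg : ∀ x, (p x).natDegree ≤ n)
    (hint : ∀ t, Integrable (fun x => (p x).eval t) μ) :
    ∃ P : 𝕜[X], ∀ t, P.eval t = ∫ x, (p x).eval t ∂μ := by
  -- Interpolation avoids integrating the coefficients of `p x`, whose integrability is not at hand.
  obtain ⟨nodes, hnodes⟩ := Infinite.exists_subset_card_eq 𝕜 (n + 1)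
  refine ⟨Lagrange.interpolate nodes id fun s => ∫ x, (p x).eval s ∂μ, fun t => ?_⟩
  have hinterp (x : α) :
      (p x).eval t = ∑ s ∈ nodes, (p x).eval s * (Lagrange.basis nodes id s).eval t := by
    have hdeg_lt : (p x).degree < nodes.card :=
      degree_le_natDegree.trans_lt (by grind [Nat.cast_lt])
    conv_lhs => rw [Lagrange.eq_interpolate (injOn_id _) hdeg_lt]
    simp [Lagrange.interpolate_apply, eval_finsetSum]
  simp only [hinterp, Lagrange.interpolate_apply, eval_finsetSum, eval_mul, eval_C]
  rw [integral_finsetSum _ fun s _ => (hint s).mul_const _]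
  simp only [integral_mul_const]

variable {E : Type*} [NormedAddCommGroup E] [NormedSpace ℝ E] [FiniteDimensional ℝ E]

theorem det_one_add_pos_of_norm_lt_one {A : E →L[ℝ] E} (hA : ‖A‖ < 1) : 0 < (1 + A).det := by
  have := FiniteDimensional.complete ℝ E
  have det_ne_zero {B : E →L[ℝ] E} (hB : B ∈ ball 0 1) : (1 + B).det ≠ 0 := by
    have hunit : IsUnit (1 + B) := by
      simpa using isUnit_one_sub_of_norm_lt_one (x := -B) (by simpa using hB)
    exact ((LinearMap.isUnit_iff_isUnit_det _).1
      (hunit.map ContinuousLinearMap.toLinearMapRingHom)).ne_zero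
  by_contra! hneg
  have hcont : Continuous fun B : E →L[ℝ] E => (1 + B).det :=
    ContinuousLinearMap.continuous_det.comp (by fun_prop)
  obtain ⟨B, hB, hdet⟩ := (convex_ball (0 : E →L[ℝ] E) 1).isPreconnected.intermediate_value
    (by simpa using hA) (mem_ball_self one_pos) hcont.continuousOn
    (show (0 : ℝ) ∈ Icc _ _ from ⟨hneg, by simp [ContinuousLinearMap.det]⟩)
  exact det_ne_zero hB hdet

end Determinant

section Volume

variable {E : Type*} [NormedAddCommGroup E] [NormedSpace ℝ E] [FiniteDimensional ℝ E]
  [MeasurableSpace E] [BorelSpace E] {μ : Measure E} [μ.IsAddHaarMeasure]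
  {s : Set E} {u : E → E} {u' : E → E →L[ℝ] E}

theorem setIntegral_det_one_add_eq_measureReal_of_nnnorm_le {K : ℝ≥0} (hK : K < 1) (hs : IsClosed s)
    (hconv : Convex ℝ s) (hu : ∀ x ∈ s, HasFDerivWithinAt u (u' x) s x)
    (hbound : ∀ x ∈ s, ‖u' x‖₊ ≤ K) (hzero : ∀ x ∈ frontier s, u x = 0) :
    ∫ x in s, (1 + u' x).det ∂μ = μ.real s := by
  have := FiniteDimensional.complete ℝ E
  have hbij : BijOn (id + u) s s := bijOn_id_add_of_lipschitzOnWith hs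
    (hconv.lipschitzOnWith_of_nnnorm_hasFDerivWithin_le hu hbound) hK hzero
  calc ∫ x in s, (1 + u' x).det ∂μ
      = ∫ x in s, |(1 + u' x).det| • (1 : ℝ) ∂μ := by
        refine setIntegral_congr_fun hs.measurableSet fun x hx => ?_
        have hnorm : ‖u' x‖ < 1 := (hbound x hx).trans_lt hK
        simp [abs_of_pos (det_one_add_pos_of_norm_lt_one hnorm)]
    _ = ∫ _ in (id + u) '' s, (1 : ℝ) ∂μ :=
        (integral_image_eq_integral_abs_det_fderiv_smul μ hs.measurableSet
          (fun x hx => (hasFDerivWithinAt_id x s).add (hu x hx)) hbij.injOn fun _ => 1).symm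
    _ = μ.real s := by rw [hbij.image_eq]; simp

theorem setIntegral_det_one_add_eq_measureReal (hs : IsCompact s) (hconv : Convex ℝ s)
    (hu : ∀ x ∈ s, HasFDerivWithinAt u (u' x) s x) (hu' : ContinuousOn u' s)
    (hzero : ∀ x ∈ frontier s, u x = 0) :
    ∫ x in s, (1 + u' x).det ∂μ = μ.real s := by
  choose p hdeg hp using fun x =>
    exists_natDegree_le_eval_eq_det_add_smul (1 : E →ₗ[ℝ] E) (u' x : E →ₗ[ℝ] E)
  replace hp (x : E) (t : ℝ) : (p x).eval t = (1 + t • u' x).det := hp x t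
  have hint (t : ℝ) : IntegrableOn (fun x => (p x).eval t) s μ := by
    simp only [hp]
    exact (ContinuousLinearMap.continuous_det.comp_continuousOn (by fun_prop)).integrableOn_compact
      hs
  obtain ⟨P, hP⟩ := exists_polynomial_eval_eq_integral hdeg hint
  obtain ⟨K, hK⟩ := hs.exists_bound_of_continuousOn hu'
  have hconst {t : ℝ} (ht : ‖t‖₊ * K.toNNReal < 1) : P.eval t = μ.real s := by
    simp only [hP, hp]
    refine setIntegral_det_one_add_eq_measureReal_of_nnnorm_le ht hs.isClosed hconv
      (fun x hx => (hu x hx).const_smul t) (fun x hx => ?_) fun x hx => by simp [hzero x hx]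
    rw [nnnorm_smul]
    gcongr
    exact NNReal.coe_le_coe.1 ((hK x hx).trans K.le_coe_toNNReal)
  have hsmall : {t : ℝ | ‖t‖₊ * K.toNNReal < 1} ∈ 𝓝 0 :=
    (isOpen_lt (by fun_prop) continuous_const).mem_nhds (by simp)
  have hP_eq : P = C (μ.real s) := eq_of_infinite_eval_eq _ _ <|
    (infinite_of_mem_nhds 0 hsmall).mono fun t ht => by simpa using hconst ht
  simpa [hP_eq, hp] using (hP 1).symm

end Volume

section SmoothSelection

variable {E F : Type*} [NormedAddCommGroup E] [NormedSpace ℝ E] [FiniteDimensional ℝ E]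
  [NormedAddCommGroup F] [InnerProductSpace ℝ F]

theorem exists_contDiff_inner_pos_eqOn {n : ℕ∞} {s a : Set E} {h f : E → F} (hs : IsClosed s)
    (ha : IsClosed a) (hh : ContinuousOn h s) (hne : ∀ x ∈ s, h x ≠ 0) (hf : ContDiff ℝ n f)
    (hpos : ∀ x ∈ s ∩ a, 0 < ⟪h x, f x⟫) :
    ∃ p : E → F, ContDiff ℝ n p ∧ (∀ x ∈ s, 0 < ⟪h x, p x⟫) ∧ EqOn p f a := by
  let T (x : E) : Set F := {y | (x ∈ s → 0 < ⟪h x, y⟫) ∧ (x ∈ a → y = f x)}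
  have hconvex (x : E) : Convex ℝ (T x) := by
    have hhalfSpace : Convex ℝ {y | 0 < ⟪h x, y⟫} :=
      convex_halfSpace_gt (innerₛₗ ℝ (h x)).isLinear 0
    exact (Convex.setOfPred_const_imp hhalfSpace).inter
      (Convex.setOfPred_const_imp (convex_singleton (f x)))
  have eventually_inner_pos {g : E → F} (hg : Continuous g) {x : E}
      (hx : x ∈ s → 0 < ⟪h x, g x⟫) : ∀ᶠ y in 𝓝 x, y ∈ s → 0 < ⟪h y, g y⟫ := by
    by_cases hxs : x ∈ s
    · exact eventually_nhdsWithin_iff.1 <|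
        ((hh x hxs).inner hg.continuousWithinAt).eventually (lt_mem_nhds (hx hxs))
    · filter_upwards [hs.isOpen_compl.mem_nhds hxs] with y hy hys using absurd hys hy
  have hlocal (x : E) : ∃ U ∈ 𝓝 x, ∃ g : E → F, ContDiff ℝ n g ∧ ∀ y ∈ U, g y ∈ T y := by
    by_cases hx : x ∈ s \ a
    · have hinner := eventually_inner_pos (g := fun _ => h x) continuous_const
        fun hxs => real_inner_self_pos.2 (hne x hxs)
      exact ⟨_, hinner.and (ha.isOpen_compl.mem_nhds hx.2), fun _ => h x, contDiff_const,
        fun y hy => ⟨hy.1, fun hya => absurd hya hy.2⟩⟩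
    · have hxa : x ∈ s → x ∈ a := by simpa using hx
      exact ⟨_, eventually_inner_pos hf.continuous fun hxs => hpos x ⟨hxs, hxa hxs⟩, f, hf,
        fun y hy => ⟨hy, fun _ => rfl⟩⟩
  obtain ⟨p, hp⟩ := exists_contMDiffMap_forall_mem_convex_of_local (n := n)
    (modelWithCornersSelf ℝ E) hconvex fun x =>
      let ⟨U, hU, g, hg, hgT⟩ := hlocal x
      ⟨U, hU, g, hg.contMDiff.contMDiffOn, hgT⟩
  exact ⟨p, p.contMDiff.contDiff, fun x => (hp x).1, fun x => (hp x).2⟩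

end SmoothSelection

section Retraction

variable {E : Type*} [NormedAddCommGroup E] [InnerProductSpace ℝ E] [FiniteDimensional ℝ E]

theorem det_eq_zero_of_mapsTo_sphere {s : Set E} {f : E → E} {f' : E →L[ℝ] E} {x : E}
    {R : ℝ} (hR : R ≠ 0) (hf : HasFDerivWithinAt f f' s x) (hs : UniqueDiffWithinAt ℝ s x)
    (hx : x ∈ s) (hmaps : MapsTo f s (sphere 0 R)) : f'.det = 0 := by
  by_contra hdet
  obtain ⟨v, hv⟩ : ∃ v, f' v = f x :=
    (LinearMap.equivOfDetNeZero (f' : E →ₗ[ℝ] E) hdet).surjective (f x)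
  have hsq (y) (hy : y ∈ s) : ‖f y‖ ^ 2 = R ^ 2 := by rw [mem_sphere_zero_iff_norm.1 (hmaps hy)]
  have hconst : HasFDerivWithinAt (fun y => ‖f y‖ ^ 2) (0 : E →L[ℝ] ℝ) s x :=
    (hasFDerivWithinAt_const (R ^ 2) x s).congr hsq (hsq x hx)
  have hinner : 2 * ⟪f x, f' v⟫ = 0 := by
    simpa using DFunLike.congr_fun (hs.eq hf.norm_sq hconst) v
  rw [hv, real_inner_self_eq_norm_sq, hsq x hx] at hinner
  exact hR (by simpa using hinner)

theorem not_exists_contDiffOn_retraction_sphere {R : ℝ} (hR : 0 < R) :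
    ¬ ∃ r : E → E, ContDiffOn ℝ 1 r (closedBall 0 R) ∧
      MapsTo r (closedBall 0 R) (sphere 0 R) ∧ EqOn r id (sphere 0 R) := by
  rintro ⟨r, hr, hmaps, hid⟩
  borelize E
  let B : Set E := closedBall 0 R
  let r' : E → E →L[ℝ] E := fderivWithin ℝ r B
  have hunique : UniqueDiffOn ℝ B := uniqueDiffOn_convex (convex_closedBall 0 R)
    (by rw [interior_closedBall _ hR.ne']; exact nonempty_ball.2 hR)
  have hderiv (x) (hx : x ∈ B) : HasFDerivWithinAt r (r' x) B x :=
    (hr.differentiableOn one_ne_zero x hx).hasFDerivWithinAt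
  have hvolume : ∫ x in B, (1 + (r' x - 1)).det ∂Measure.addHaar = Measure.addHaar.real B :=
    setIntegral_det_one_add_eq_measureReal (u := fun x => r x - x) (isCompact_closedBall 0 R)
      (convex_closedBall 0 R) (fun x hx => (hderiv x hx).sub (hasFDerivWithinAt_id x B))
      ((hr.continuousOn_fderivWithin hunique le_rfl).sub continuousOn_const)
      fun x hx => sub_eq_zero.2 (hid (frontier_closedBall_subset_sphere hx))
  have hdet : ∫ x in B, (1 + (r' x - 1)).det ∂Measure.addHaar = 0 := by
    refine setIntegral_eq_zero_of_forall_eq_zero fun x hx => ?_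
    rw [add_sub_cancel]
    exact det_eq_zero_of_mapsTo_sphere hR.ne' (hderiv x hx) (hunique x hx) hx hmaps
  have hpos : 0 < Measure.addHaar.real B :=
    ENNReal.toReal_pos (measure_closedBall_pos _ _ hR).ne' measure_closedBall_lt_top.ne
  exact hpos.ne (hdet.symm.trans hvolume)

theorem exists_eq_zero_of_inner_pos_on_sphere {h : E → E} {R : ℝ} (hR : 0 < R)
    (hcont : ContinuousOn h (closedBall 0 R)) (hpos : ∀ x ∈ sphere 0 R, 0 < ⟪h x, x⟫) :
    ∃ x ∈ closedBall 0 R, h x = 0 := by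
  by_contra! hne
  obtain ⟨p, hp, hinner, hid⟩ := exists_contDiff_inner_pos_eqOn (n := 1) isClosed_closedBall
    isClosed_sphere hcont hne contDiff_id fun x hx => hpos x hx.2
  have hp_ne (x) (hx : x ∈ closedBall 0 R) : p x ≠ 0 := by
    intro h0
    simpa [h0] using hinner x hx
  refine not_exists_contDiffOn_retraction_sphere hR ⟨fun x => (R / ‖p x‖) • p x, ?_, ?_, ?_⟩
  · exact (contDiffOn_const.div (hp.contDiffOn.norm ℝ hp_ne) fun x hx =>
      norm_ne_zero_iff.2 (hp_ne x hx)).smul hp.contDiffOn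
  · intro x hx
    simp [norm_smul, abs_of_pos hR, hp_ne x hx]
  · intro x hx
    simp [hid hx, mem_sphere_zero_iff_norm.1 hx, hR.ne']

end Retraction

theorem stmt_13_general {E : Type*} [NormedAddCommGroup E] [InnerProductSpace ℝ E]
    [FiniteDimensional ℝ E] {h : E → E} {R : ℝ} (hR : 0 < R)
    (hcont : ContinuousOn h (closedBall 0 R)) (hpos : ∀ v ∈ sphere 0 R, 0 ≤ ⟪h v, v⟫) :
    ∃ v ∈ closedBall 0 R, h v = 0 := by
  have hclosed : IsClosed (h '' closedBall 0 R) :=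
    ((isCompact_closedBall 0 R).image_of_continuousOn hcont).isClosed
  suffices (0 : E) ∈ closure (h '' closedBall 0 R) by rwa [hclosed.closure_eq] at this
  refine Metric.mem_closure_iff.2 fun ε hε => ?_
  obtain ⟨v, hv, hzero⟩ : ∃ v ∈ closedBall 0 R, h v + (ε / (2 * R)) • v = 0 := by
    refine exists_eq_zero_of_inner_pos_on_sphere hR (by fun_prop) fun v hv => ?_
    rw [inner_add_left, real_inner_smul_left, real_inner_self_eq_norm_sq,
      mem_sphere_zero_iff_norm.1 hv]
    have := hpos v hv
    positivity
  refine ⟨h v, mem_image_of_mem h hv, ?_⟩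
  rw [eq_neg_of_add_eq_zero_left hzero, dist_zero_left, norm_neg, norm_smul,
    Real.norm_of_nonneg (by positivity)]
  calc ε / (2 * R) * ‖v‖ ≤ ε / (2 * R) * R := by gcongr; simpa using hv
    _ < ε := by field_simp; linarith

theorem stmt_13 (L : ℕ) (h : EuclideanSpace ℝ (Fin L) → EuclideanSpace ℝ (Fin L))
    (hcont : Continuous h) (R : ℝ) (hR : 0 < R)
    (hpos : ∀ v, ‖v‖ = R → 0 ≤ ⟪h v, v⟫) :
    ∃ v : EuclideanSpace ℝ (Fin L), ‖v‖ ≤ R ∧ h v = 0 := by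
  simpa using stmt_13_general hR hcont.continuousOn (by simpa using hpos)
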